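/- arXiv:1106.5700 — 6 statements merged into one kernel-verified Lean document; each statement's English description precedes it below -/
import Mathlib

section
/- Let A be a stuttering-invariant TGBA and T a Kripke structure over the same set AP of atomic propositions, and let (q₁,a₁) →^{ac} (q₂,a₂) be a transition of the Symbolic Observation Product A▷T whose target (q₂,a₂) is an aggregate state (not a divergent state). Then for any state s₂ ∈ a₂ there exists a (possibly indirect) ancestor s₁ ∈ a₁ and states t₁,…,t_n ∈ a₂ such that (q₁,s₁) →^{ac} (q₂,t₁) → (q₂,t₂) → ⋯ → (q₂,t_n) → (q₂,s₂) is a sequence of transitions of the stuttering synchronized product A⊗̃T. -/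
open scoped Classical

/-- Boolean formulas over atomic propositions of type `α`. -/
inductive BForm (α : Type) : Type
  | tru : BForm α
  | fls : BForm α
  | var : α → BForm α
  | band : BForm α → BForm α → BForm α
  | bor : BForm α → BForm α → BForm α
  | bnot : BForm α → BForm α

namespace BForm

variable {α : Type}

/-- Evaluation of a Boolean formula under an assignment. -/
def eval : BForm α → (α → Bool) → Bool
  | tru, _ => true
  | fls, _ => false
  | var a, ρ => ρ a
  | band f g, ρ => f.eval ρ && g.eval ρ
  | bor f g, ρ => f.eval ρ || g.eval ρ
  | bnot f, ρ => !(f.eval ρ)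

/-- Free variables (occurring atomic propositions) of a Boolean formula. -/
def FV : BForm α → Set α
  | tru => ∅
  | fls => ∅
  | var a => {a}
  | band f g => f.FV ∪ g.FV
  | bor f g => f.FV ∪ g.FV
  | bnot f => f.FV

/-- Satisfiability of a Boolean formula. -/
def Sat (f : BForm α) : Prop := ∃ ρ : α → Bool, f.eval ρ = true

/-- The literal describing the value of the assignment `ρ` on the proposition `a`. -/
def lit (ρ : α → Bool) (a : α) : BForm α := if ρ a then var a else bnot (var a)

end BForm

/-- The formula (a conjunction of literals) encoding the restriction of the
assignment `ρ` to the finite set `AP`: the interpretation of an assignment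
as a Boolean formula. -/
noncomputable def assignForm {α : Type} (AP : Finset α) (ρ : α → Bool) : BForm α :=
  (AP.toList.map (BForm.lit ρ)).foldr BForm.band BForm.tru

/-- `ρ ≡_E ρ'`: the two assignments agree on all propositions of `E`. -/
def AgreeOn {α : Type} (E : Set α) (ρ ρ' : α → Bool) : Prop := ∀ a ∈ E, ρ a = ρ' a

/-- Restriction of an assignment to the set `E` (`false` outside of `E`). -/
noncomputable def restrS {α : Type} (E : Set α) (ρ : α → Bool) : α → Bool :=
  fun p => if p ∈ E then ρ p else false

/-- A Transition-based Generalized Büchi Automaton over atomic propositions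
drawn from `α`, with alphabet `AP`, state set `Q`, acceptance conditions `F`,
transition relation `δ ⊆ Q × B(AP) × 2^F × Q` and initial state `init`. -/
structure TGBA (α : Type) where
  AP : Finset α
  Q : Type
  F : Type
  init : Q
  δ : Set (Q × BForm α × Set F × Q)

/-- A Kripke structure over atomic propositions drawn from `α`, with alphabet
`AP`, states `S` labeled by assignments via `lab`, transition relation `Δ`
and initial state `init`. -/
structure Kripke (α : Type) where
  AP : Finset α
  S : Type
  lab : S → α → Bool
  Δ : Set (S × S)
  init : S

namespace TGBA

variable {α : Type}

/-- Well-formedness: every transition label is a satisfiable formula over `AP`. -/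
def WF (A : TGBA α) : Prop := ∀ t ∈ A.δ, (t.2.1).FV ⊆ ↑A.AP ∧ (t.2.1).Sat

/-- A run: an infinite sequence of consecutive transitions starting at the
initial state. -/
def IsRun (A : TGBA α) (π : ℕ → A.Q × BForm α × Set A.F × A.Q) : Prop :=
  (π 0).1 = A.init ∧ ∀ i, π i ∈ A.δ ∧ (π i).2.2.2 = (π (i + 1)).1

/-- An accepting run: a run visiting every acceptance condition infinitely often. -/
def IsAccRun (A : TGBA α) (π : ℕ → A.Q × BForm α × Set A.F × A.Q) : Prop :=
  A.IsRun π ∧ ∀ c : A.F, ∀ i : ℕ, ∃ j, i ≤ j ∧ c ∈ (π j).2.2.1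

/-- `Acc(A) ≠ ∅`: the automaton has an accepting run. -/
def HasAccRun (A : TGBA α) : Prop := ∃ π, A.IsAccRun π

/-- The language of the TGBA: the infinite words compatible with some accepting run. -/
def Lang (A : TGBA α) : Set (ℕ → α → Bool) :=
  {w | ∃ π, A.IsAccRun π ∧ ∀ i, ((π i).2.1).eval (w i) = true}

/-- One-step successor relation between automaton states. -/
def Step (A : TGBA α) (q q' : A.Q) : Prop := ∃ f ac, (q, f, ac, q') ∈ A.δ

/-- Reachability between automaton states. -/
def Reach (A : TGBA α) : A.Q → A.Q → Prop := Relation.ReflTransGen A.Step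

/-- `FV(q)`: the union of the free variables of the labels of all transitions
reachable from `q`. -/
def FVq (A : TGBA α) (q : A.Q) : Set α :=
  {p | ∃ t ∈ A.δ, A.Reach q t.1 ∧ p ∈ (t.2.1).FV}

/-- There is some transition between the two states. -/
def HasTrans (A : TGBA α) (p₁ p₂ : A.Q) : Prop := ∃ f ac, (p₁, f, ac, p₂) ∈ A.δ

/-- There is a transition with acceptance set `ac` between the two states. -/
def HasTransAc (A : TGBA α) (p₁ : A.Q) (ac : Set A.F) (p₂ : A.Q) : Prop :=
  ∃ f, (p₁, f, ac, p₂) ∈ A.δ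

end TGBA

/-- Prepend a finite word to an infinite word. -/
def appendω {β : Type} (u : List β) (v : ℕ → β) : ℕ → β := fun n =>
  if h : n < u.length then u.get ⟨n, h⟩ else v (n - u.length)

/-- A language of infinite words is stuttering-invariant. -/
def StutterInvariantLang {β : Type} (L : Set (ℕ → β)) : Prop :=
  ∀ (u : List β) (ρ : β) (v : ℕ → β), appendω (u ++ [ρ]) v ∈ L ↔ appendω (u ++ [ρ, ρ]) v ∈ L

/-- A TGBA is stuttering-invariant iff its language is. -/
def TGBA.StutterInvariant {α : Type} (A : TGBA α) : Prop := StutterInvariantLang A.Lang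

/-- Two infinite words are stuttering equivalent: they are equal after collapsing
consecutive repeated letters, as witnessed by matching block decompositions. -/
def StutterEquiv {β : Type} (w w' : ℕ → β) : Prop :=
  ∃ ι κ : ℕ → ℕ, ι 0 = 0 ∧ κ 0 = 0 ∧ StrictMono ι ∧ StrictMono κ ∧
    ∀ k i j, ι k ≤ i → i < ι (k + 1) → κ k ≤ j → j < κ (k + 1) → w i = w' j

/-- Two languages are stuttering equivalent: every word of either language is
stuttering equivalent to some word of the other. -/
def LangStutterEquiv {β : Type} (L L' : Set (ℕ → β)) : Prop :=
  (∀ w ∈ L, ∃ w' ∈ L', StutterEquiv w w') ∧ ∀ w' ∈ L', ∃ w ∈ L, StutterEquiv w w'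

namespace Kripke

variable {α : Type}

/-- `SuccF(a, P)`: successors of states of `a`, filtered to keep only those
whose label satisfies `P`. -/
def SuccF (T : Kripke α) (a : Set T.S) (P : (α → Bool) → Prop) : Set T.S :=
  {s' | ∃ s ∈ a, (s, s') ∈ T.Δ ∧ P (T.lab s')}

/-- `ReachF(a, P)`: the least superset of `a` closed under `SuccF(·, P)`. -/
def ReachF (T : Kripke α) (a : Set T.S) (P : (α → Bool) → Prop) : Set T.S :=
  ⋂₀ {b | a ⊆ b ∧ T.SuccF b P ⊆ b}

/-- `FSucc(a, P)`: successors of the states of `a` whose label satisfies `P`. -/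
def FSucc (T : Kripke α) (a : Set T.S) (P : (α → Bool) → Prop) : Set T.S :=
  {s' | ∃ s ∈ a, (s, s') ∈ T.Δ ∧ P (T.lab s)}

/-- `FReach(a, P)`: the least superset of `a` closed under `FSucc(·, P)`. -/
def FReach (T : Kripke α) (a : Set T.S) (P : (α → Bool) → Prop) : Set T.S :=
  ⋂₀ {b | a ⊆ b ∧ T.FSucc b P ⊆ b}

/-- The label of (a representative state of) an aggregate. -/
noncomputable def aggLab (T : Kripke α) (a : Set T.S) : α → Bool :=
  if h : a.Nonempty then T.lab h.some else fun _ => false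

/-- Homogeneity of a set of states w.r.t. the observed propositions `E`. -/
def Homog (T : Kripke α) (E : Set α) (a : Set T.S) : Prop :=
  ∀ s ∈ a, ∀ s' ∈ a, AgreeOn E (T.lab s) (T.lab s')

/-- `a` is a (nonempty, homogeneous, saturated) aggregate w.r.t. `E`. -/
def IsAgg (T : Kripke α) (E : Set α) (a : Set T.S) : Prop :=
  a.Nonempty ∧ T.Homog E a ∧ a = T.ReachF a fun ρ => AgreeOn E ρ (T.aggLab a)

/-- `a` contains a cycle of `Δ`. -/
def HasCycle (T : Kripke α) (a : Set T.S) : Prop :=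
  ∃ s ∈ a, Relation.TransGen (fun x y => x ∈ a ∧ y ∈ a ∧ (x, y) ∈ T.Δ) s s

end Kripke

/-- Transition relation of the synchronized product `A ⊗ T`. -/
def synchδ {α : Type} (A : TGBA α) (T : Kripke α) :
    Set ((A.Q × T.S) × BForm α × Set A.F × (A.Q × T.S)) :=
  {t | ∃ (q₁ q₂ : A.Q) (s₁ s₂ : T.S) (ac : Set A.F),
    t = ((q₁, s₁), assignForm T.AP (T.lab s₁), ac, (q₂, s₂)) ∧ (s₁, s₂) ∈ T.Δ ∧
    ∃ g : BForm α, (q₁, g, ac, q₂) ∈ A.δ ∧ g.eval (T.lab s₁) = true}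

/-- The synchronized product `A ⊗ T` of a TGBA and a Kripke structure. -/
def synchProd {α : Type} (A : TGBA α) (T : Kripke α) : TGBA α where
  AP := T.AP
  Q := A.Q × T.S
  F := A.F
  init := (A.init, T.init)
  δ := synchδ A T

/-- The stuttering synchronized product `A ⊗̃ T`: the synchronized product
together with the extra stuttering transitions. -/
def stutProd {α : Type} (A : TGBA α) (T : Kripke α) : TGBA α where
  AP := T.AP
  Q := A.Q × T.S
  F := A.F
  init := (A.init, T.init)
  δ := synchδ A T ∪
    {t | ∃ q₁ s₁ s₂,
      t = ((q₁, s₁), assignForm T.AP (T.lab s₁), (∅ : Set A.F), (q₁, s₂)) ∧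
      (s₁, s₂) ∈ T.Δ ∧ AgreeOn (A.FVq q₁) (T.lab s₁) (T.lab s₂)}

/-- The Symbolic Observation Graph of `T` over the observed propositions `E`:
a Kripke structure whose states are aggregates (`Sum.inl`) and divergent
states (`Sum.inr`, assignments over `E`). -/
noncomputable def SOG {α : Type} (T : Kripke α) (E : Finset α) : Kripke α where
  AP := E
  S := Set T.S ⊕ ({x // x ∈ E} → Bool)
  lab := fun x =>
    match x with
    | Sum.inl a => restrS ↑E (T.aggLab a)
    | Sum.inr l => fun p => if h : p ∈ E then l ⟨p, h⟩ else false
  Δ := {pr |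
    (∃ a a' : Set T.S, pr = (Sum.inl a, Sum.inl a') ∧ T.IsAgg ↑E a ∧ T.IsAgg ↑E a' ∧
      a' = T.ReachF (T.SuccF a (fun ρ => AgreeOn ↑E ρ (T.aggLab a')) \ a)
          fun ρ => AgreeOn ↑E ρ (T.aggLab a')) ∨
    (∃ (a : Set T.S) (l : {x // x ∈ E} → Bool), pr = (Sum.inl a, Sum.inr l) ∧
      T.IsAgg ↑E a ∧ T.HasCycle a ∧ ∀ p : {x // x ∈ E}, l p = T.aggLab a ↑p) ∨
    ∃ l : {x // x ∈ E} → Bool, pr = (Sum.inr l, Sum.inr l)}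
  init := Sum.inl (T.ReachF {T.init} fun ρ => AgreeOn ↑E ρ (T.lab T.init))

/-- The finite set of propositions of `AP` observable from `q`. -/
noncomputable def fvFinset {α : Type} (A : TGBA α) (q : A.Q) : Finset α :=
  A.AP.filter fun p => p ∈ A.FVq q

/-- The Symbolic Observation Product `A ▷ T`: a TGBA whose states pair a state of
`A` with either an aggregate (`Sum.inl`) or a divergent state (`Sum.inr`, an
assignment over `FV(q)`, canonically `false` outside `FV(q)`). -/
noncomputable def SOP {α : Type} (A : TGBA α) (T : Kripke α) : TGBA α where
  AP := A.AP
  Q := A.Q × (Set T.S ⊕ (α → Bool))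
  F := A.F
  init := (A.init,
    Sum.inl (T.ReachF {T.init} fun ρ => AgreeOn (A.FVq A.init) ρ (T.lab T.init)))
  δ := {t |
    -- aggregate to aggregate
    (∃ (q₁ q₂ : A.Q) (a₁ a₂ : Set T.S) (ac : Set A.F),
      t = ((q₁, Sum.inl a₁), assignForm (fvFinset A q₁) (T.aggLab a₁), ac,
           (q₂, Sum.inl a₂)) ∧
      T.IsAgg (A.FVq q₁) a₁ ∧ T.IsAgg (A.FVq q₂) a₂ ∧
      (∃ f : BForm α, (q₁, f, ac, q₂) ∈ A.δ ∧
        f.eval (restrS (A.FVq q₁) (T.aggLab a₁)) = true) ∧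
      ∃ l' : α → Bool,
        a₂ = T.ReachF (T.SuccF a₁ (fun ρ => AgreeOn (A.FVq q₂) ρ l') \ a₁)
            fun ρ => AgreeOn (A.FVq q₂) ρ l') ∨
    -- aggregate to divergent
    (∃ (q₁ q₂ : A.Q) (a : Set T.S) (l₂ : α → Bool) (ac : Set A.F),
      t = ((q₁, Sum.inl a), assignForm (fvFinset A q₁) (T.aggLab a), ac,
           (q₂, Sum.inr l₂)) ∧
      T.IsAgg (A.FVq q₁) a ∧ T.HasCycle a ∧
      l₂ = restrS (A.FVq q₂) (T.aggLab a) ∧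
      ∃ f : BForm α, (q₁, f, ac, q₂) ∈ A.δ ∧
        f.eval (restrS (A.FVq q₁) (T.aggLab a)) = true) ∨
    -- divergent to divergent
    ∃ (q₁ q₂ : A.Q) (l₁ l₂ : α → Bool) (ac : Set A.F),
      t = ((q₁, Sum.inr l₁), assignForm (fvFinset A q₁) l₁, ac, (q₂, Sum.inr l₂)) ∧
      l₁ = restrS (A.FVq q₁) l₁ ∧ l₂ = restrS (A.FVq q₂) l₁ ∧
      ∃ f : BForm α, (q₁, f, ac, q₂) ∈ A.δ ∧ f.eval l₁ = true}

/-- `SF(q, ac)` as a predicate on assignments: `ρ` satisfies the disjunction of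
the labels of the self-loops on `q` whose acceptance sets are included in `ac`. -/
def SFpred {α : Type} (A : TGBA α) (q : A.Q) (ac : Set A.F) : (α → Bool) → Prop :=
  fun ρ => ∃ (f : BForm α) (ac' : Set A.F), (q, f, ac', q) ∈ A.δ ∧ ac' ⊆ ac ∧ f.eval ρ = true

/-- The Self-Loop Aggregation Product `A ⊠ T`. -/
def SLAP {α : Type} (A : TGBA α) (T : Kripke α) : TGBA α where
  AP := ∅
  Q := A.Q × Set T.S
  F := A.F
  init := (A.init, T.FReach {T.init} (SFpred A A.init ∅))
  δ := {t | ∃ (q₁ q₂ : A.Q) (a₁ a₂ : Set T.S) (ac : Set A.F),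
    t = ((q₁, a₁), BForm.tru, ac, (q₂, a₂)) ∧ a₁.Nonempty ∧ a₂.Nonempty ∧
    ∃ f : BForm α, (q₁, f, ac, q₂) ∈ A.δ ∧ (q₁ = q₂ → ac ≠ ∅) ∧
      a₂ = T.FReach (T.FSucc a₁ fun ρ => f.eval ρ = true) (SFpred A q₂ ac)}

theorem BForm.eval_congr_FV {α : Type} (f : BForm α) (ρ ρ' : α → Bool)
    (h : ∀ p ∈ f.FV, ρ p = ρ' p) : f.eval ρ = f.eval ρ' := by
  induction f with
  | tru => rfl
  | fls => rfl
  | var a => exact h a rfl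
  | band f g ihf ihg =>
    simp only [BForm.eval]
    rw [ihf fun p hp => h p (Or.inl hp), ihg fun p hp => h p (Or.inr hp)]
  | bor f g ihf ihg =>
    simp only [BForm.eval]
    rw [ihf fun p hp => h p (Or.inl hp), ihg fun p hp => h p (Or.inr hp)]
  | bnot f ih =>
    simp only [BForm.eval]
    rw [ih h]

/-- Let `(q₁,a₁) →^{ac} (q₂,a₂)` be a transition of the Symbolic
Observation Product `A ▷ T` whose target is an aggregate state.  Then for any
state `s₂ ∈ a₂` there exist an ancestor `s₁ ∈ a₁` and states `t 0, …, t n ∈ a₂`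
with `t n = s₂` such that
`(q₁,s₁) →^{ac} (q₂,t 0) → (q₂,t 1) → ⋯ → (q₂,t n)` is a sequence of
transitions of the stuttering synchronized product `A ⊗̃ T`. -/
theorem stmt4 {α : Type} (A : TGBA α) (T : Kripke α)
    [Finite A.Q] [Finite A.F] [Nonempty A.F] [Finite T.S]
    (hwf : A.WF) (hAP : A.AP = T.AP) (hst : A.StutterInvariant)
    (q₁ q₂ : A.Q) (a₁ a₂ : Set T.S) (ac : Set A.F)
    (ht : (SOP A T).HasTransAc (q₁, Sum.inl a₁) ac (q₂, Sum.inl a₂)) :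
    ∀ s₂ ∈ a₂, ∃ s₁ ∈ a₁, ∃ (n : ℕ) (t : ℕ → T.S),
      (∀ i ≤ n, t i ∈ a₂) ∧ t n = s₂ ∧
      (stutProd A T).HasTransAc (q₁, s₁) ac (q₂, t 0) ∧
      ∀ i < n, (stutProd A T).HasTrans (q₂, t i) (q₂, t (i + 1)) := by
  obtain ⟨lb, hδ⟩ := ht
  rcases hδ with ⟨p₁, p₂, b₁, b₂, c, heq, hag₁, hag₂, ⟨f, hf, hfe⟩, l', hl⟩ |
    ⟨p₁, p₂, b, l, c, heq, _⟩ | ⟨p₁, p₂, l, l2, c, heq, _⟩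
  · have heq' : (((q₁, Sum.inl a₁), lb, ac, (q₂, Sum.inl a₂)) :
      (A.Q × (Set T.S ⊕ (α → Bool))) × BForm α × Set A.F × (A.Q × (Set T.S ⊕ (α → Bool)))) =
      ((p₁, Sum.inl b₁), assignForm (fvFinset A p₁) (T.aggLab b₁), c, (p₂, Sum.inl b₂)) := heq
    clear heq
    simp only [Prod.mk.injEq, Sum.inl.injEq] at heq'
    obtain ⟨⟨rfl, rfl⟩, -, rfl, rfl, rfl⟩ := heq'
    have hsub : T.SuccF a₁ (fun ρ => AgreeOn (A.FVq q₂) ρ l') \ a₁ ⊆ a₂ := by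
      rw [hl]
      exact Set.subset_sInter fun b hb => hb.1
    have hcl : T.SuccF a₂ (fun ρ => AgreeOn (A.FVq q₂) ρ l') ⊆ a₂ := by
      rintro x ⟨s, hs, hsx, hx⟩
      rw [hl] at hs ⊢
      exact fun b hb => hb.2 ⟨s, hs b hb, hsx, hx⟩
    have key : a₂ ⊆ {s₂ | s₂ ∈ a₂ ∧ ∃ s₁ ∈ a₁, ∃ (n : ℕ) (t : ℕ → T.S),
      (∀ i ≤ n, t i ∈ a₂) ∧ t n = s₂ ∧
      (stutProd A T).HasTransAc (q₁, s₁) ac (q₂, t 0) ∧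
      ∀ i < n, (stutProd A T).HasTrans (q₂, t i) (q₂, t (i + 1))} := by
      intro x hx
      rw [hl] at hx
      refine hx _ ⟨?_, ?_⟩
      · intro y hy
        refine ⟨hsub hy, ?_⟩
        obtain ⟨s, hs, hsy, -⟩ := hy.1
        refine ⟨s, hs, 0, fun _ => y, fun _ _ => hsub hy, rfl, ?_, fun i hi => absurd hi (by omega)⟩
        refine ⟨assignForm T.AP (T.lab s), Or.inl ⟨q₁, q₂, s, y, ac, rfl, hsy, f, hf, ?_⟩⟩
        rw [← hfe]
        apply BForm.eval_congr_FV
        intro p hp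
        have hpF : p ∈ A.FVq q₁ := ⟨_, hf, Relation.ReflTransGen.refl, hp⟩
        simp only [restrS, if_pos hpF, Kripke.aggLab, dif_pos hag₁.1]
        exact hag₁.2.1 s hs _ hag₁.1.some_mem p hpF
      · intro y hy
        obtain ⟨s, ⟨hs, s₁, hs₁, n, t, ht, htn, h0, hstep⟩, hsy, hlab⟩ := hy
        have hya : y ∈ a₂ := hcl ⟨s, hs, hsy, hlab⟩
        refine ⟨hya, s₁, hs₁, n + 1, fun i => if i ≤ n then t i else y, ?_, ?_, ?_, ?_⟩
        · intro i hi
          by_cases h : i ≤ n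
          · simpa [h] using ht i h
          · simpa [h] using hya
        · simp
        · simpa using h0
        · intro i hi
          by_cases h : i < n
          · have h1 : i ≤ n := by omega
            have h2 : i + 1 ≤ n := by omega
            simpa only [h1, h2, if_true] using hstep i h
          · have h1 : i = n := by omega
            subst h1
            simp only [le_refl, if_true, Nat.not_succ_le_self, if_false, htn]
            exact ⟨_, _, Or.inr ⟨q₂, s, y, rfl, hsy, hag₂.2.1 s hs y hya⟩⟩
    exact fun s₂ hs₂ => (key hs₂).2
  · have heq' : (((q₁, Sum.inl a₁), lb, ac, (q₂, Sum.inl a₂)) :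
      (A.Q × (Set T.S ⊕ (α → Bool))) × BForm α × Set A.F × (A.Q × (Set T.S ⊕ (α → Bool)))) =
      ((p₁, Sum.inl b), assignForm (fvFinset A p₁) (T.aggLab b), c, (p₂, Sum.inr l)) := heq
    simp at heq'
  · have heq' : (((q₁, Sum.inl a₁), lb, ac, (q₂, Sum.inl a₂)) :
      (A.Q × (Set T.S ⊕ (α → Bool))) × BForm α × Set A.F × (A.Q × (Set T.S ⊕ (α → Bool)))) =
      ((p₁, Sum.inr l), assignForm (fvFinset A p₁) l, c, (p₂, Sum.inr l2)) := heq
    simp at heq'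
end

section
/- Let A be a stuttering-invariant TGBA and T a Kripke structure over the same set AP of atomic propositions. If the Symbolic Observation Product A▷T has an accepting run, then the stuttering synchronized product A⊗̃T has an accepting run. -/
open scoped Classical

theorem BForm.eval_congr' {α : Type} (f : BForm α) {ρ ρ' : α → Bool}
    (h : AgreeOn f.FV ρ ρ') : f.eval ρ = f.eval ρ' := by
  induction f with
  | tru => rfl
  | fls => rfl
  | var a => exact h a rfl
  | band f g hf hg =>
    simp only [BForm.eval]
    rw [hf fun a ha => h a (Or.inl ha), hg fun a ha => h a (Or.inr ha)]
  | bor f g hf hg =>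
    simp only [BForm.eval]
    rw [hf fun a ha => h a (Or.inl ha), hg fun a ha => h a (Or.inr ha)]
  | bnot f hf =>
    simp only [BForm.eval]
    rw [hf h]

theorem FVq_of_trans {α : Type} {A : TGBA α} {q q' : A.Q} {f : BForm α} {ac : Set A.F}
    (h : (q, f, ac, q') ∈ A.δ) : f.FV ⊆ A.FVq q := fun _ hp =>
  ⟨_, h, Relation.ReflTransGen.refl, hp⟩

theorem FVq_mono {α : Type} {A : TGBA α} {q q' : A.Q} {f : BForm α} {ac : Set A.F}
    (h : (q, f, ac, q') ∈ A.δ) : A.FVq q' ⊆ A.FVq q := by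
  rintro p ⟨t, ht, hr, hp⟩
  exact ⟨t, ht, Relation.ReflTransGen.head ⟨f, ac, h⟩ hr, hp⟩

theorem mem_reachF {α : Type} {T : Kripke α} {E : Set T.S} {P : (α → Bool) → Prop} {s : T.S}
    (hs : s ∈ T.ReachF E P) : ∃ e ∈ E,
      Relation.ReflTransGen
        (fun x y => x ∈ T.ReachF E P ∧ y ∈ T.ReachF E P ∧ (x, y) ∈ T.Δ) e s := by
  have key := Set.mem_sInter.1 hs {s | s ∈ T.ReachF E P ∧ ∃ e ∈ E,
      Relation.ReflTransGen
        (fun x y => x ∈ T.ReachF E P ∧ y ∈ T.ReachF E P ∧ (x, y) ∈ T.Δ) e s} ?_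
  · exact key.2
  · constructor
    · intro e he
      exact ⟨Set.mem_sInter.2 fun b hb => hb.1 he, e, he, Relation.ReflTransGen.refl⟩
    · rintro s' ⟨s, ⟨h1, e, he, hr⟩, hd, hP⟩
      have h2 : s' ∈ T.ReachF E P := Set.mem_sInter.2 fun b hb =>
        hb.2 ⟨s, Set.mem_sInter.1 h1 b hb, hd, hP⟩
      exact ⟨h2, e, he, hr.tail ⟨h1, h2, hd⟩⟩

/-- Stuttering steps followed by one synchronized step. -/
def BigStep {α : Type} (A : TGBA α) (T : Kripke α) (q : A.Q) (ac : Set A.F) (q' : A.Q)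
    (s s' : T.S) : Prop :=
  ∃ t, Relation.ReflTransGen
      (fun x y => (x, y) ∈ T.Δ ∧ AgreeOn (A.FVq q) (T.lab x) (T.lab y)) s t ∧
    (t, s') ∈ T.Δ ∧ ∃ g, (q, g, ac, q') ∈ A.δ ∧ g.eval (T.lab t) = true

/-- The invariant relating a state of the SOP with a set of entry states. -/
def SInv {α : Type} (A : TGBA α) (T : Kripke α) (q : A.Q) (E : Set T.S) :
    (Set T.S ⊕ (α → Bool)) → Prop
  | Sum.inl a => E.Nonempty ∧ ∃ P, a = T.ReachF E P
  | Sum.inr l => E.Nonempty ∧ (∀ s ∈ E, ∃ s' ∈ E, (s', s) ∈ T.Δ) ∧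
      ∀ s ∈ E, AgreeOn (A.FVq q) l (T.lab s)

theorem sinv_nonempty {α : Type} {A : TGBA α} {T : Kripke α} {q : A.Q} {E : Set T.S}
    {x : Set T.S ⊕ (α → Bool)} (h : SInv A T q E x) : E.Nonempty := by
  cases x with
  | inl a => exact h.1
  | inr l => exact h.1

theorem agg_agree {α : Type} {T : Kripke α} {E : Set α} {a : Set T.S} (h : T.IsAgg E a)
    {s : T.S} (hs : s ∈ a) : AgreeOn E (T.aggLab a) (T.lab s) := by
  unfold Kripke.aggLab
  rw [dif_pos h.1]
  exact h.2.1 _ h.1.some_mem _ hs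

theorem agg_bigStep {α : Type} {A : TGBA α} {T : Kripke α} {q₁ q₂ : A.Q} {ac : Set A.F}
    {E : Set T.S} {P : (α → Bool) → Prop} {f : BForm α}
    (hagg : T.IsAgg (A.FVq q₁) (T.ReachF E P)) (hf : (q₁, f, ac, q₂) ∈ A.δ)
    (he : f.eval (restrS (A.FVq q₁) (T.aggLab (T.ReachF E P))) = true)
    {t s' : T.S} (ht : t ∈ T.ReachF E P) (hd : (t, s') ∈ T.Δ) :
    ∃ s ∈ E, BigStep A T q₁ ac q₂ s s' := by
  obtain ⟨e, heE, hr⟩ := mem_reachF ht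
  refine ⟨e, heE, t, Relation.ReflTransGen.mono (fun x y h => ⟨h.2.2, hagg.2.1 _ h.1 _ h.2.1⟩) _ _ hr, hd, f, hf, ?_⟩
  rw [← he]
  apply BForm.eval_congr'
  intro p hp
  have hp' := FVq_of_trans hf hp
  simp only [restrS, if_pos hp']
  exact (agg_agree hagg ht p hp').symm

theorem sop_step {α : Type} {A : TGBA α} {T : Kripke α}
    (t : (SOP A T).Q × BForm α × Set (SOP A T).F × (SOP A T).Q) (ht : t ∈ (SOP A T).δ)
    (E : Set T.S) (hE : SInv A T t.1.1 E t.1.2) :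
    ∃ E', SInv A T t.2.2.2.1 E' t.2.2.2.2 ∧
      ∀ s' ∈ E', ∃ s ∈ E, BigStep A T t.1.1 t.2.2.1 t.2.2.2.1 s s' := by
  rcases ht with ⟨q₁, q₂, a₁, a₂, ac, rfl, h1, h2, ⟨f, hf, he⟩, l', ha₂⟩ |
    ⟨q₁, q₂, a, l₂, ac, rfl, h1, hc, hl, f, hf, he⟩ | ⟨q₁, q₂, l₁, l₂, ac, rfl, h1, h2, f, hf, he⟩
  · obtain ⟨-, P, rfl⟩ := hE
    refine ⟨_, ⟨?_, _, ha₂⟩, ?_⟩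
    · obtain ⟨x, hx⟩ := h2.1
      rw [ha₂] at hx
      obtain ⟨e, h, -⟩ := mem_reachF hx
      exact ⟨e, h⟩
    · rintro s' ⟨⟨t, ht, hd, -⟩, -⟩
      exact agg_bigStep h1 hf he ht hd
  · obtain ⟨-, P, rfl⟩ := hE
    refine ⟨{s | s ∈ T.ReachF E P ∧ Relation.TransGen
      (fun x y => x ∈ T.ReachF E P ∧ y ∈ T.ReachF E P ∧ (x, y) ∈ T.Δ) s s}, ?_⟩
    have hpred : ∀ s, s ∈ T.ReachF E P ∧ Relation.TransGen
      (fun x y => x ∈ T.ReachF E P ∧ y ∈ T.ReachF E P ∧ (x, y) ∈ T.Δ) s s →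
      ∃ b, (b ∈ T.ReachF E P ∧ Relation.TransGen
      (fun x y => x ∈ T.ReachF E P ∧ y ∈ T.ReachF E P ∧ (x, y) ∈ T.Δ) b b) ∧ (b, s) ∈ T.Δ := by
      rintro s ⟨hs, hcyc⟩
      obtain ⟨b, hb, hbs⟩ := Relation.TransGen.tail'_iff.1 hcyc
      exact ⟨b, ⟨hbs.1, Relation.TransGen.head' hbs hb⟩, hbs.2.2⟩
    refine ⟨⟨hc, hpred, ?_⟩, ?_⟩
    · rintro s ⟨hs, -⟩ p hp
      rw [hl]
      simp only [restrS]
      rw [if_pos hp]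
      exact agg_agree h1 hs p (FVq_mono hf hp)
    · intro s' hs'
      obtain ⟨b, hb, hd⟩ := hpred s' hs'
      exact agg_bigStep h1 hf he hb.1 hd
  · obtain ⟨hne, hp, ha⟩ := hE
    refine ⟨E, ⟨hne, hp, ?_⟩, ?_⟩
    · intro s hs p hp
      rw [h2]
      simp only [restrS]
      rw [if_pos hp]
      exact ha s hs p (FVq_mono hf hp)
    · intro s' hs'
      obtain ⟨s, hs, hd⟩ := hp s' hs'
      refine ⟨s, hs, s, Relation.ReflTransGen.refl, hd, f, hf, ?_⟩
      rw [← he]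
      exact (BForm.eval_congr' f fun p hp => ha s hs p (FVq_of_trans hf hp)).symm

/-- König's lemma for finite backward-total layered graphs. -/
theorem konig {S : Type} [Finite S] (E : ℕ → Set S) (M : ℕ → S → S → Prop)
    (hne : ∀ i, (E i).Nonempty) (hb : ∀ i, ∀ s' ∈ E (i + 1), ∃ s ∈ E i, M i s s') :
    ∃ s : ℕ → S, s 0 ∈ E 0 ∧ ∀ i, M i (s i) (s (i + 1)) := by
  have fin : ∀ n, ∀ x ∈ E n, ∃ s : ℕ → S, s n = x ∧ s 0 ∈ E 0 ∧
      ∀ i < n, M i (s i) (s (i + 1)) := by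
    intro n
    induction n with
    | zero => exact fun x hx => ⟨fun _ => x, rfl, hx, fun i hi => absurd hi (Nat.not_lt_zero i)⟩
    | succ n ih =>
      intro x hx
      obtain ⟨y, hy, hM⟩ := hb n x hx
      obtain ⟨s, h1, h2, h3⟩ := ih y hy
      refine ⟨fun j => if j ≤ n then s j else x, by simp, by simpa using h2, ?_⟩
      intro i hi
      rcases Nat.lt_succ_iff_lt_or_eq.1 hi with h | rfl
      · simpa [h.le, Nat.succ_le_of_lt h] using h3 i h
      · simpa [h1] using hM
  have fin' : ∀ n, ∃ s : ℕ → S, s 0 ∈ E 0 ∧ ∀ i < n, M i (s i) (s (i + 1)) := by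
    intro n
    obtain ⟨x, hx⟩ := hne n
    obtain ⟨s, -, h⟩ := fin n x hx
    exact ⟨s, h⟩
  choose t ht0 ht using fin'
  have hlim : ∀ i, ∃ x, ∀ᶠ n in (Filter.hyperfilter ℕ : Filter ℕ), t n i = x := by
    intro i
    obtain ⟨x, hx⟩ := ((Filter.hyperfilter ℕ).map fun n => t n i).eq_pure_of_finite
    refine ⟨x, ?_⟩
    have : ({x} : Set S) ∈ (Filter.hyperfilter ℕ).map fun n => t n i := by
      rw [hx]; exact Ultrafilter.mem_pure.2 rfl
    exact this
  choose s hs using hlim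
  refine ⟨s, ?_, fun i => ?_⟩
  · obtain ⟨n, hn⟩ := (hs 0).exists
    exact hn ▸ ht0 n
  · have hgt : ∀ᶠ n in (Filter.hyperfilter ℕ : Filter ℕ), i < n := by
      have := Filter.eventually_gt_atTop i
      rw [← Nat.cofinite_eq_atTop] at this
      exact Filter.hyperfilter_le_cofinite this
    obtain ⟨n, ⟨h1, h2⟩, h3⟩ := (((hs i).and (hs (i + 1))).and hgt).exists
    rw [← h1, ← h2]
    exact ht n i h3

theorem rtg_path {S : Type} {r : S → S → Prop} {s t : S} (h : Relation.ReflTransGen r s t) :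
    ∃ (k : ℕ) (p : ℕ → S), p 0 = s ∧ p k = t ∧ ∀ j < k, r (p j) (p (j + 1)) := by
  induction h with
  | refl => exact ⟨0, fun _ => s, rfl, rfl, fun i hi => absurd hi (Nat.not_lt_zero i)⟩
  | @tail b c _ hbc ih =>
    obtain ⟨k, p, h0, hk, hp⟩ := ih
    refine ⟨k + 1, fun j => if j ≤ k then p j else c, by simpa using h0, by simp, ?_⟩
    intro i hi
    rcases Nat.lt_succ_iff_lt_or_eq.1 hi with h | rfl
    · simpa [h.le, Nat.succ_le_of_lt h] using hp i h
    · simpa [hk] using hbc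

/-- Traversal of consecutive blocks of lengths `k i + 1`. -/
def blockSeq (k : ℕ → ℕ) : ℕ → ℕ × ℕ
  | 0 => (0, 0)
  | n + 1 => if (blockSeq k n).2 < k (blockSeq k n).1 then
      ((blockSeq k n).1, (blockSeq k n).2 + 1) else ((blockSeq k n).1 + 1, 0)

theorem blockSeq_le (k : ℕ → ℕ) (n : ℕ) : (blockSeq k n).1 ≤ n := by
  induction n with
  | zero => simp [blockSeq]
  | succ n ih =>
    simp only [blockSeq]
    split_ifs
    · exact ih.trans (Nat.le_succ n)
    · exact Nat.succ_le_succ ih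

theorem blockSeq_snd_le (k : ℕ → ℕ) (n : ℕ) : (blockSeq k n).2 ≤ k (blockSeq k n).1 := by
  induction n with
  | zero => simp [blockSeq]
  | succ n ih =>
    simp only [blockSeq]
    split_ifs with h
    · exact h
    · exact Nat.zero_le _

theorem blockSeq_hit (k : ℕ → ℕ) (i j : ℕ) (hj : j ≤ k i) : ∃ n, blockSeq k n = (i, j) := by
  have inner : ∀ i, (∃ n, blockSeq k n = (i, 0)) → ∀ j ≤ k i, ∃ n, blockSeq k n = (i, j) := by
    intro i h0 j
    induction j with
    | zero => exact fun _ => h0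
    | succ j ih =>
      intro hj
      obtain ⟨n, hn⟩ := ih (Nat.le_of_succ_le hj)
      refine ⟨n + 1, ?_⟩
      have : j < k i := hj
      simp [blockSeq, hn, this]
  refine inner i ?_ j hj
  clear hj j
  induction i with
  | zero => exact ⟨0, rfl⟩
  | succ i ih =>
    obtain ⟨n, hn⟩ := inner i ih (k i) le_rfl
    exact ⟨n + 1, by simp [blockSeq, hn]⟩

theorem run_of_bigSteps {α : Type} {A : TGBA α} {T : Kripke α} (q : ℕ → A.Q) (ac : ℕ → Set A.F)
    (s : ℕ → T.S) (hq : q 0 = A.init) (hs : s 0 = T.init)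
    (hM : ∀ i, BigStep A T (q i) (ac i) (q (i + 1)) (s i) (s (i + 1)))
    (hac : ∀ c : A.F, ∀ i : ℕ, ∃ j, i ≤ j ∧ c ∈ ac j) : (stutProd A T).HasAccRun := by
  have h1 : ∀ i, ∃ (k : ℕ) (p : ℕ → T.S), p 0 = s i ∧
      (∀ j < k, (p j, p (j + 1)) ∈ T.Δ ∧
        AgreeOn (A.FVq (q i)) (T.lab (p j)) (T.lab (p (j + 1)))) ∧
      (p k, s (i + 1)) ∈ T.Δ ∧
      ∃ g, (q i, g, ac i, q (i + 1)) ∈ A.δ ∧ g.eval (T.lab (p k)) = true := by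
    intro i
    obtain ⟨t, hr, hd, hg⟩ := hM i
    obtain ⟨k, p, h0, rfl, hp⟩ := rtg_path hr
    exact ⟨k, p, h0, hp, hd, hg⟩
  choose k p hp0 hp hd hg using h1
  let st : ℕ × ℕ → A.Q × T.S := fun c => (q c.1, p c.1 c.2)
  let c := blockSeq k
  refine ⟨fun n => (st (c n), assignForm T.AP (T.lab (p (c n).1 (c n).2)),
    (if (c n).2 < k (c n).1 then ∅ else ac (c n).1), st (c (n + 1))), ⟨?_, ?_⟩, ?_⟩
  · change (q 0, p 0 0) = (A.init, T.init)
    rw [hq, hp0, hs]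
  · intro n
    refine ⟨?_, rfl⟩
    by_cases h : (c n).2 < k (c n).1
    · have hc : c (n + 1) = ((c n).1, (c n).2 + 1) := by
        change blockSeq k (n + 1) = _
        rw [blockSeq]; exact if_pos h
      change ((st (c n), assignForm T.AP (T.lab (p (c n).1 (c n).2)),
        (if (c n).2 < k (c n).1 then (∅ : Set A.F) else ac (c n).1), st (c (n + 1))) :
          (A.Q × T.S) × BForm α × Set A.F × (A.Q × T.S)) ∈ _
      rw [if_pos h, hc]
      exact Or.inr ⟨q (c n).1, p (c n).1 (c n).2, p (c n).1 ((c n).2 + 1), rfl,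
        (hp _ _ h).1, (hp _ _ h).2⟩
    · have hc : c (n + 1) = ((c n).1 + 1, 0) := by
        change blockSeq k (n + 1) = _
        rw [blockSeq]; exact if_neg h
      have he : (c n).2 = k (c n).1 := le_antisymm (blockSeq_snd_le k n) (not_lt.1 h)
      change ((st (c n), assignForm T.AP (T.lab (p (c n).1 (c n).2)),
        (if (c n).2 < k (c n).1 then (∅ : Set A.F) else ac (c n).1), st (c (n + 1))) :
          (A.Q × T.S) × BForm α × Set A.F × (A.Q × T.S)) ∈ _
      rw [if_neg h, hc]
      refine Or.inl ⟨q (c n).1, q ((c n).1 + 1), p (c n).1 (c n).2, p ((c n).1 + 1) 0, _,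
        rfl, ?_, ?_⟩
      · rw [hp0, he]; exact hd _
      · rw [he]; exact hg _
  · intro x i
    obtain ⟨j, hj, hx⟩ := hac x i
    obtain ⟨n, hn⟩ := blockSeq_hit k j (k j) le_rfl
    refine ⟨n, ?_, ?_⟩
    · have := blockSeq_le k n
      rw [hn] at this
      exact hj.trans this
    · have hn' : c n = (j, k j) := hn
      change x ∈ (if (c n).2 < k (c n).1 then (∅ : Set A.F) else ac (c n).1)
      rw [hn', if_neg (lt_irrefl _)]
      exact hx

/-- If the Symbolic Observation Product `A ▷ T` has an accepting
run, then the stuttering synchronized product `A ⊗̃ T` has an accepting run. -/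
theorem stmt5 {α : Type} (A : TGBA α) (T : Kripke α)
    [Finite A.Q] [Finite A.F] [Nonempty A.F] [Finite T.S]
    (hwf : A.WF) (hAP : A.AP = T.AP) (hst : A.StutterInvariant) :
    (SOP A T).HasAccRun → (stutProd A T).HasAccRun := by
  rintro ⟨π, ⟨h0, hrun⟩, hacc⟩
  have hinit : SInv A T (π 0).1.1 {T.init} (π 0).1.2 := by
    rw [h0]
    exact ⟨⟨_, rfl⟩, _, rfl⟩
  have step : ∀ i, ∀ E : {E : Set T.S // SInv A T (π i).1.1 E (π i).1.2},
      ∃ E' : {E : Set T.S // SInv A T (π (i + 1)).1.1 E (π (i + 1)).1.2},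
        ∀ s' ∈ E'.1, ∃ s ∈ E.1,
          BigStep A T (π i).1.1 (π i).2.2.1 (π (i + 1)).1.1 s s' := by
    rintro i ⟨E, hE⟩
    obtain ⟨E', h1, h2⟩ := sop_step (π i) (hrun i).1 E hE
    rw [(hrun i).2] at h1 h2
    exact ⟨⟨E', h1⟩, h2⟩
  choose nxt hnxt using step
  let E : ∀ i, {E : Set T.S // SInv A T (π i).1.1 E (π i).1.2} := fun i =>
    Nat.rec ⟨{T.init}, hinit⟩ (fun i e => nxt i e) i
  have hne : ∀ i, (E i).1.Nonempty := by
    intro i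
    exact sinv_nonempty (E i).2
  obtain ⟨s, hs0, hs⟩ := konig (fun i => (E i).1)
    (fun i => BigStep A T (π i).1.1 (π i).2.2.1 (π (i + 1)).1.1) hne (fun i => hnxt i (E i))
  exact run_of_bigSteps (fun i => (π i).1.1) (fun i => (π i).2.2.1) s (by rw [h0]; rfl) hs0 hs hacc
end

section
/- Let A be a TGBA over AP' and T a Kripke structure over AP ⊇ AP', and let (q₁,a₁) →^{ac} (q₂,a₂) be a transition of the Self-Loop Aggregation Product A⊠T. Then for any state s₂ ∈ a₂ there exists a (possibly indirect) ancestor s₁ ∈ a₁, states t₁,…,t_n ∈ a₂ and acceptance sets α₁,…,α_n with αᵢ ⊆ ac for all i, such that (q₁,s₁) →^{ac} (q₂,t₁) →^{α₁} (q₂,t₂) →^{α₂} ⋯ (q₂,t_n) →^{α_n} (q₂,s₂) is a sequence of transitions of the synchronized product A⊗T. -/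
open scoped Classical

/-- Let `(q₁,a₁) →^{ac} (q₂,a₂)` be a transition of the Self-Loop
Aggregation Product `A ⊠ T`.  Then for any state `s₂ ∈ a₂` there exist an
ancestor `s₁ ∈ a₁`, states `t 0, …, t n ∈ a₂` with `t n = s₂` and acceptance
sets `αs i ⊆ ac` such that
`(q₁,s₁) →^{ac} (q₂,t 0) →^{αs 0} (q₂,t 1) →^{αs 1} ⋯ →^{αs (n-1)} (q₂,t n)`
is a sequence of transitions of the synchronized product `A ⊗ T`. -/
theorem stmt10 {α : Type} (A : TGBA α) (T : Kripke α)
    [Finite A.Q] [Finite A.F] [Nonempty A.F] [Finite T.S]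
    (hwf : A.WF) (hAP : A.AP ⊆ T.AP)
    (q₁ q₂ : A.Q) (a₁ a₂ : Set T.S) (ac : Set A.F)
    (ht : (SLAP A T).HasTransAc (q₁, a₁) ac (q₂, a₂)) :
    ∀ s₂ ∈ a₂, ∃ s₁ ∈ a₁, ∃ (n : ℕ) (t : ℕ → T.S) (αs : ℕ → Set A.F),
      (∀ i ≤ n, t i ∈ a₂) ∧ t n = s₂ ∧ (∀ i < n, αs i ⊆ ac) ∧
      (synchProd A T).HasTransAc (q₁, s₁) ac (q₂, t 0) ∧
      ∀ i < n, (synchProd A T).HasTransAc (q₂, t i) (αs i) (q₂, t (i + 1)) := by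
  obtain ⟨f₀, p₁, p₂, b₁, b₂, ac', heq, -, -, f, hf, -, ha₂⟩ := ht
  obtain ⟨h1, h2⟩ := Prod.mk.inj heq
  obtain ⟨-, h3⟩ := Prod.mk.inj h2
  obtain ⟨h4, h5⟩ := Prod.mk.inj h3
  obtain ⟨h6, h7⟩ := Prod.mk.inj h1
  obtain ⟨h8, h9⟩ := Prod.mk.inj h5
  clear heq h1 h2 h3 h5
  subst h4 h6 h7 h8 h9
  -- the initial layer and the closure property of the aggregate
  have hbase : T.FSucc a₁ (fun ρ => f.eval ρ = true) ⊆ a₂ := by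
    rw [ha₂]
    intro s hs b hb
    exact hb.1 hs
  have hclosed : T.FSucc a₂ (SFpred A q₂ ac) ⊆ a₂ := by
    rintro s' ⟨s, hs, hΔ, hP⟩
    rw [ha₂] at hs ⊢
    intro b hb
    exact hb.2 ⟨s, hs b hb, hΔ, hP⟩
  intro s₂ hs₂
  have hmem₂ := hs₂
  rw [ha₂] at hmem₂
  refine hmem₂ {s | ∃ s₁ ∈ a₁, ∃ (n : ℕ) (t : ℕ → T.S) (αs : ℕ → Set A.F),
      (∀ i ≤ n, t i ∈ a₂) ∧ t n = s ∧ (∀ i < n, αs i ⊆ ac) ∧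
      (synchProd A T).HasTransAc (q₁, s₁) ac (q₂, t 0) ∧
      ∀ i < n, (synchProd A T).HasTransAc (q₂, t i) (αs i) (q₂, t (i + 1))} ⟨?_, ?_⟩
  · intro s hs
    obtain ⟨s₁, hs₁, hΔ, hP⟩ := id hs
    refine ⟨s₁, hs₁, 0, fun _ => s, fun _ => ∅, fun _ _ => hbase hs, rfl, by simp, ?_, by simp⟩
    exact ⟨_, q₁, q₂, s₁, s, ac, rfl, hΔ, f, hf, hP⟩
  · rintro s' ⟨s, ⟨s₁, hs₁, n, t, αs, hmem, hlast, hsub, hfirst, hstep⟩, hΔ, hP⟩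
    have hs : s ∈ a₂ := hlast ▸ hmem n le_rfl
    have hs' : s' ∈ a₂ := hclosed ⟨s, hs, hΔ, hP⟩
    obtain ⟨g, β, hg, hβ, hev⟩ := hP
    refine ⟨s₁, hs₁, n + 1, fun i => if i ≤ n then t i else s',
      fun i => if i < n then αs i else β, ?_, ?_, ?_, ?_, ?_⟩
    · intro i _
      by_cases h : i ≤ n
      · simpa [h] using hmem i h
      · simpa [h] using hs'
    · simp
    · intro i _
      by_cases h : i < n
      · simpa [h] using hsub i h
      · simpa [h] using hβ
    · simpa using hfirst
    · intro i hi
      by_cases h : i < n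
      · have h1 : i ≤ n := h.le
        have h2 : i + 1 ≤ n := h
        simp only [h, h1, h2, if_true]
        exact hstep i h
      · have hin : i = n := by omega
        subst hin
        simp only [le_refl, lt_irrefl, if_true, if_false, hlast,
          show ¬ (i + 1 ≤ i) by omega]
        exact ⟨_, q₂, q₂, s, s', β, rfl, hΔ, g, hg, hev⟩
end

section
/- Let A be a TGBA over AP' and T a Kripke structure over AP ⊇ AP'. If the Self-Loop Aggregation Product A⊠T has an accepting run, then the synchronized product A⊗T has an accepting run. -/
open scoped Classical

namespace SlapAux

variable {α : Type}

/-- Paths of a given length. -/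
def PathN (B : TGBA α) : ℕ → B.Q → B.Q → Prop
  | 0, z, x => z = x
  | n + 1, z, x => ∃ z', B.Step z z' ∧ PathN B n z' x

theorem PathN.snoc (B : TGBA α) : ∀ (n : ℕ) (z x y : B.Q), PathN B n z x → B.Step x y →
    PathN B (n + 1) z y
  | 0, z, x, y, h, hs => by
      cases h
      exact ⟨y, hs, rfl⟩
  | n + 1, z, x, y, h, hs => by
      obtain ⟨z', h1, h2⟩ := h
      exact ⟨z', h1, PathN.snoc B n z' x y h2 hs⟩

theorem concat (B : TGBA α) (x y : ℕ → B.Q) (f : ℕ → BForm α) (ac : ℕ → Set B.F)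
    (h0 : ∃ n, PathN B n B.init (x 0))
    (ht : ∀ i, (x i, f i, ac i, y i) ∈ B.δ)
    (hp : ∀ i, ∃ n, PathN B n (y i) (x (i + 1)))
    (hac : ∀ c : B.F, ∀ i : ℕ, ∃ j, i ≤ j ∧ c ∈ ac j) : B.HasAccRun := by
  let Cfg := {c : ℕ × ℕ × B.Q // PathN B c.2.1 c.2.2 (x c.1)}
  have step : ∀ c : Cfg, ∃ (t : B.Q × BForm α × Set B.F × B.Q) (c' : Cfg), t ∈ B.δ ∧
      t.1 = c.1.2.2 ∧ t.2.2.2 = c'.1.2.2 ∧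
      (c.1.2.1 = 0 → c'.1.1 = c.1.1 + 1 ∧ t.2.2.1 = ac c.1.1) ∧
      (c.1.2.1 ≠ 0 → c'.1.1 = c.1.1 ∧ c'.1.2.1 + 1 = c.1.2.1) := by
    rintro ⟨⟨i, n, z⟩, h⟩
    cases n with
    | zero =>
      obtain ⟨m, hm⟩ := hp i
      have h' : z = x i := h
      exact ⟨(x i, f i, ac i, y i), ⟨(i + 1, m, y i), hm⟩, ht i, h'.symm, rfl,
        fun _ => ⟨rfl, rfl⟩, fun h => absurd rfl h⟩
    | succ n =>
      obtain ⟨z', ⟨g, a, hg⟩, h2⟩ := h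
      exact ⟨(z, g, a, z'), ⟨(i, n, z'), h2⟩, hg, rfl, rfl,
        fun h => absurd h (Nat.succ_ne_zero n), fun _ => ⟨rfl, rfl⟩⟩
  choose tr nx hδ hsrc htgt hz hnz using step
  obtain ⟨n0, hn0⟩ := h0
  let cf : ℕ → Cfg := fun k => Nat.rec ⟨(0, n0, B.init), hn0⟩ (fun _ c => nx c) k
  have cfs : ∀ k, cf (k + 1) = nx (cf k) := fun k => rfl
  have reach0 : ∀ n k, (cf k).1.2.1 = n → ∃ j, k ≤ j ∧ (cf j).1.2.1 = 0 ∧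
      (cf j).1.1 = (cf k).1.1 := by
    intro n
    induction n with
    | zero => intro k hk; exact ⟨k, le_rfl, hk, rfl⟩
    | succ n ih =>
      intro k hk
      obtain ⟨h1, h2⟩ := hnz (cf k) (by omega)
      rw [← cfs] at h1 h2
      obtain ⟨j, hj, hj0, hji⟩ := ih (k + 1) (by omega)
      exact ⟨j, by omega, hj0, by omega⟩
  have reachi : ∀ d k, ∃ j, k ≤ j ∧ (cf j).1.2.1 = 0 ∧ (cf j).1.1 = (cf k).1.1 + d := by
    intro d
    induction d with
    | zero => intro k; exact reach0 _ k rfl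
    | succ d ih =>
      intro k
      obtain ⟨j, hj, hj0, hji⟩ := ih k
      obtain ⟨h1, -⟩ := hz (cf j) hj0
      rw [← cfs] at h1
      obtain ⟨l, hl, hl0, hli⟩ := reach0 _ (j + 1) rfl
      exact ⟨l, by omega, hl0, by omega⟩
  refine ⟨fun k => tr (cf k), ⟨hsrc (cf 0), fun k => ⟨hδ _, ?_⟩⟩, ?_⟩
  · exact (htgt (cf k)).trans (hsrc (cf (k + 1))).symm
  · intro c N
    obtain ⟨i, hi, hci⟩ := hac c (cf N).1.1
    obtain ⟨j, hj, hj0, hji⟩ := reachi (i - (cf N).1.1) N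
    refine ⟨j, hj, ?_⟩
    show c ∈ (tr (cf j)).2.2.1
    rw [(hz (cf j) hj0).2, hji, Nat.add_sub_cancel' hi]
    exact hci

-- Konig lemma, in inverse-system form.
open CategoryTheory in
theorem konig {S : Type} [Finite S] (a : ℕ → Set S) (hne : ∀ i, (a i).Nonempty)
    (R : ℕ → S → S → Prop) (h : ∀ i, ∀ s ∈ a (i + 1), ∃ s' ∈ a i, R i s' s) :
    ∃ s : ℕ → S, (∀ i, s i ∈ a i) ∧ ∀ i, R i (s i) (s (i + 1)) := by
  choose p hp hR using h
  let X : ℕ → Type := fun i => a i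
  let g : ∀ i, X (i + 1) → X i := fun i s => ⟨p i s.1 s.2, hp i s.1 s.2⟩
  let F : ℕᵒᵖ ⥤ Type := CategoryTheory.Functor.ofOpSequence (X := X)
    (fun i => TypeCat.ofHom (g i))
  have : ∀ j, Finite (F.obj j) := fun j => inferInstanceAs (Finite (a j.unop))
  have : ∀ j, Nonempty (F.obj j) := fun j => (hne j.unop).to_subtype
  obtain ⟨s, hs⟩ := nonempty_sections_of_finite_cofiltered_system F
  have key : ∀ i, g i (s (Opposite.op (i + 1))) = s (Opposite.op i) := by
    intro i
    have := hs (CategoryTheory.homOfLE (Nat.le_add_right i 1)).op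
    rw [CategoryTheory.Functor.ofOpSequence_map_homOfLE_succ] at this
    exact this
  refine ⟨fun i => (s (Opposite.op i)).1, fun i => (s (Opposite.op i)).2, fun i => ?_⟩
  have := congrArg Subtype.val (key i)
  show R i (s (Opposite.op i)).1 (s (Opposite.op (i + 1))).1
  rw [← this]
  exact hR i _ _

/-- States of a self-loop closure are reached by product paths from the seed. -/
theorem freach_path (A : TGBA α) (T : Kripke α) (q : A.Q) (ac : Set A.F) (b : Set T.S)
    (s : T.S) (hs : s ∈ T.FReach b (SFpred A q ac)) :
    ∃ u ∈ b, ∃ n, PathN (synchProd A T) n (q, u) (q, s) := by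
  refine hs {s | ∃ u ∈ b, ∃ n, PathN (synchProd A T) n (q, u) (q, s)} ⟨?_, ?_⟩
  · intro u hu
    exact ⟨u, hu, 0, rfl⟩
  · rintro s' ⟨s, ⟨u, hu, n, hn⟩, hΔ, f, ac', hf, -, he⟩
    refine ⟨u, hu, n + 1, PathN.snoc _ n _ _ _ hn ?_⟩
    exact ⟨assignForm T.AP (T.lab s), ac', q, q, s, s', ac', rfl, hΔ, f, hf, he⟩

end SlapAux

/-- If the Self-Loop Aggregation Product `A ⊠ T` has an accepting
run, then the synchronized product `A ⊗ T` has an accepting run. -/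
theorem stmt11 {α : Type} (A : TGBA α) (T : Kripke α)
    [Finite A.Q] [Finite A.F] [Nonempty A.F] [Finite T.S]
    (hwf : A.WF) (hAP : A.AP ⊆ T.AP) :
    (SLAP A T).HasAccRun → (synchProd A T).HasAccRun := by
  rintro ⟨π, ⟨hinit, hrun⟩, hacc⟩
  have hst : ∀ i, (π i).1.2.Nonempty ∧ ∃ f : BForm α,
      ((π i).1.1, f, (π i).2.2.1, (π (i + 1)).1.1) ∈ A.δ ∧
      (π (i + 1)).1.2 = T.FReach (T.FSucc (π i).1.2 fun ρ => f.eval ρ = true)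
        (SFpred A (π (i + 1)).1.1 (π i).2.2.1) := by
    intro i
    obtain ⟨⟨q₁, q₂, a₁, a₂, ac, he, h1, h2, f, hf, -, ha⟩, hn⟩ := hrun i
    rw [← hn, he]
    exact ⟨h1, f, hf, ha⟩
  choose hne f hf ha using hst
  obtain ⟨s, hsa, hR⟩ := SlapAux.konig (fun i => (π i).1.2) hne
    (fun i s' s => ∃ u, (s', u) ∈ T.Δ ∧ (f i).eval (T.lab s') = true ∧
      ∃ n, SlapAux.PathN (synchProd A T) n ((π (i + 1)).1.1, u) ((π (i + 1)).1.1, s)) (by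
    intro i s hs
    have hs : s ∈ (π (i + 1)).1.2 := hs
    rw [ha i] at hs
    obtain ⟨u, ⟨s', hs', hΔ, he⟩, hn⟩ := SlapAux.freach_path A T _ _ _ s hs
    exact ⟨s', hs', u, hΔ, he, hn⟩)
  choose u hΔ he hn using hR
  refine SlapAux.concat (synchProd A T) (fun i => ((π i).1.1, s i))
    (fun i => ((π (i + 1)).1.1, u i)) (fun i => assignForm T.AP (T.lab (s i)))
    (fun i => (π i).2.2.1) ?_ ?_ hn hacc
  · have h0 := hsa 0
    have e1 : (π 0).1.1 = A.init := congrArg Prod.fst hinit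
    have e2 : (π 0).1.2 = T.FReach {T.init} (SFpred A A.init ∅) := congrArg Prod.snd hinit
    simp only [e2] at h0
    obtain ⟨v, hv, n, hn⟩ := SlapAux.freach_path A T _ _ _ _ h0
    cases hv
    refine ⟨n, ?_⟩
    simp only [e1]
    exact hn
  · intro i
    exact ⟨_, _, _, _, _, rfl, hΔ i, f i, hf i, he i⟩
end

section
/- Let A be a TGBA over AP' and T a Kripke structure over AP ⊇ AP'. For every n and every finite path π_n = (q₀,s₀) →^{f₀,ac₀} (q₁,s₁) ⋯ →^{f_{n−1},ac_{n−1}} (q_n,s_n) of the synchronized product A⊗T starting in its initial state, there exist m ≤ n, a finite path σ_m = (q'₀,a₀) →^{ac_{φ(0)}} (q'₁,a₁) ⋯ →^{ac_{φ(m−1)}} (q'_m,a_m) of the Self-Loop Aggregation Product A⊠T starting in its initial state, and a strictly increasing function φ : {0,…,m−1} → {0,…,n−1}, such that q'_m = q_n, s_n ∈ a_m, and every index j < n with ac_j ≠ ∅ belongs to the image of φ (so no transition of π_n carrying a nonempty acceptance set is omitted). -/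
open scoped Classical

theorem Kripke.subset_FReach {α : Type} (T : Kripke α) (a : Set T.S)
    (P : (α → Bool) → Prop) : a ⊆ T.FReach a P :=
  fun _ hx _ hb => hb.1 hx

theorem Kripke.FSucc_FReach {α : Type} (T : Kripke α) (a : Set T.S)
    (P : (α → Bool) → Prop) : T.FSucc (T.FReach a P) P ⊆ T.FReach a P := by
  rintro x ⟨y, hy, hyx, hP⟩ b hb
  exact hb.2 ⟨y, hy b hb, hyx, hP⟩

theorem Kripke.FSucc_SF_empty {α : Type} (A : TGBA α) (T : Kripke α) (a : Set T.S)
    (q : A.Q) (ac : Set A.F) :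
    T.FSucc (T.FReach a (SFpred A q ac)) (SFpred A q ∅) ⊆ T.FReach a (SFpred A q ac) := by
  rintro x ⟨y, hy, hyx, f, ac', h1, h2, h3⟩
  exact T.FSucc_FReach a _ ⟨y, hy, hyx, f, ac', h1, h2.trans (Set.empty_subset _), h3⟩

theorem synch_step {α : Type} (A : TGBA α) (T : Kripke α) {q₁ q₂ : A.Q} {s₁ s₂ : T.S}
    {ac : Set A.F} (h : (synchProd A T).HasTransAc (q₁, s₁) ac (q₂, s₂)) :
    (s₁, s₂) ∈ T.Δ ∧ ∃ g : BForm α, (q₁, g, ac, q₂) ∈ A.δ ∧ g.eval (T.lab s₁) = true := by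
  obtain ⟨f, p₁, p₂, t₁, t₂, ac₁, heq, h⟩ := h
  cases heq
  exact h

theorem stmt12_aux {α : Type} (A : TGBA α) (T : Kripke α)
    (q : ℕ → A.Q) (s : ℕ → T.S) (ac : ℕ → Set A.F)
    (hq0 : q 0 = A.init) (hs0 : s 0 = T.init) (n : ℕ)
    (hpath : ∀ i < n,
      (synchProd A T).HasTransAc (q i, s i) (ac i) (q (i + 1), s (i + 1))) :
    ∃ m ≤ n, ∃ (φ : ℕ → ℕ) (q' : ℕ → A.Q) (a : ℕ → Set T.S),
      (∀ i j, i < j → j < m → φ i < φ j) ∧ (∀ i < m, φ i < n) ∧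
      ((q' 0, a 0) : (SLAP A T).Q) = (SLAP A T).init ∧
      (∀ i < m,
        (SLAP A T).HasTransAc (q' i, a i) (ac (φ i)) (q' (i + 1), a (i + 1))) ∧
      q' m = q n ∧ s n ∈ a m ∧
      (∀ j < n, ac j ≠ ∅ → ∃ i < m, φ i = j) ∧
      T.FSucc (a m) (SFpred A (q n) ∅) ⊆ a m := by
  induction n with
  | zero =>
    refine ⟨0, le_rfl, id, fun _ => A.init, fun _ => T.FReach {T.init} (SFpred A A.init ∅),
      by simp, by simp, rfl, by simp, hq0.symm, ?_, by simp, ?_⟩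
    · exact T.subset_FReach _ _ hs0
    · rw [hq0]; exact T.FSucc_FReach _ _
  | succ n ih =>
    obtain ⟨m, hm, φ, q', a, hmono, hlt, hinit, htr, hqm, hsm, hcov, hcl⟩ :=
      ih (fun i hi => hpath i (by omega))
    obtain ⟨hΔ, g, hg, hev⟩ := synch_step A T (hpath n (by omega))
    by_cases hc : q n = q (n + 1) ∧ ac n = ∅
    · obtain ⟨hqq, hac⟩ := hc
      refine ⟨m, by omega, φ, q', a, hmono, fun i hi => (hlt i hi).trans (by omega), hinit, htr,
        hqm.trans hqq, ?_, ?_, ?_⟩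
      · rw [← hqq, hac] at hg
        exact hcl ⟨s n, hsm, hΔ, g, ∅, hg, le_rfl, hev⟩
      · intro j hj hne
        rcases Nat.lt_succ_iff_lt_or_eq.mp hj with h | h
        · exact hcov j h hne
        · subst h; exact absurd hac hne
      · rw [← hqq]; exact hcl
    · have hin : s (n + 1) ∈ T.FReach (T.FSucc (a m) fun ρ => g.eval ρ = true)
          (SFpred A (q (n + 1)) (ac n)) :=
        T.subset_FReach _ _ ⟨s n, hsm, hΔ, hev⟩
      refine ⟨m + 1, by omega, Function.update φ m n, Function.update q' (m + 1) (q (n + 1)),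
        Function.update a (m + 1) (T.FReach (T.FSucc (a m) fun ρ => g.eval ρ = true)
          (SFpred A (q (n + 1)) (ac n))), ?_, ?_, ?_, ?_, ?_, ?_, ?_, ?_⟩
      · intro i j hij hj
        rw [Function.update_of_ne (by omega : i ≠ m)]
        by_cases h : j = m
        · subst h; rw [Function.update_self]; exact hlt i hij
        · rw [Function.update_of_ne h]; exact hmono i j hij (by omega)
      · intro i hi
        by_cases h : i = m
        · subst h; rw [Function.update_self]; omega
        · rw [Function.update_of_ne h]; have := hlt i (by omega); omega
      · rw [Function.update_of_ne (by omega), Function.update_of_ne (by omega)]; exact hinit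
      · intro i hi
        rw [Function.update_of_ne (by omega : i ≠ m + 1),
          Function.update_of_ne (by omega : i ≠ m + 1)]
        by_cases h : i = m
        · subst h
          rw [Function.update_self, Function.update_self, Function.update_self, hqm]
          exact ⟨BForm.tru, _, _, _, _, _, rfl, ⟨_, hsm⟩, ⟨_, hin⟩, g, hg,
            fun h1 h2 => hc ⟨h1, h2⟩, rfl⟩
        · rw [Function.update_of_ne h, Function.update_of_ne (by omega : i + 1 ≠ m + 1),
            Function.update_of_ne (by omega : i + 1 ≠ m + 1)]
          exact htr i (by omega)
      · rw [Function.update_self]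
      · rw [Function.update_self]; exact hin
      · intro j hj hne
        rcases Nat.lt_succ_iff_lt_or_eq.mp hj with h | h
        · obtain ⟨i, hi, rfl⟩ := hcov j h hne
          exact ⟨i, by omega, Function.update_of_ne (by omega) _ _⟩
        · exact ⟨m, by omega, by rw [Function.update_self, h]⟩
      · rw [Function.update_self]; exact Kripke.FSucc_SF_empty A T _ _ _

/-- Every finite path of the synchronized product `A ⊗ T`
starting at its initial state projects to a finite path of the Self-Loop
Aggregation Product `A ⊠ T` starting at its initial state, via a strictly
increasing function `φ` whose image contains every index carrying a nonempty
acceptance set. -/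
theorem stmt12 {α : Type} (A : TGBA α) (T : Kripke α)
    [Finite A.Q] [Finite A.F] [Nonempty A.F] [Finite T.S]
    (hwf : A.WF) (hAP : A.AP ⊆ T.AP)
    (n : ℕ) (q : ℕ → A.Q) (s : ℕ → T.S) (ac : ℕ → Set A.F)
    (hq0 : q 0 = A.init) (hs0 : s 0 = T.init)
    (hpath : ∀ i < n,
      (synchProd A T).HasTransAc (q i, s i) (ac i) (q (i + 1), s (i + 1))) :
    ∃ m ≤ n, ∃ (φ : ℕ → ℕ) (q' : ℕ → A.Q) (a : ℕ → Set T.S),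
      (∀ i j, i < j → j < m → φ i < φ j) ∧ (∀ i < m, φ i < n) ∧
      ((q' 0, a 0) : (SLAP A T).Q) = (SLAP A T).init ∧
      (∀ i < m,
        (SLAP A T).HasTransAc (q' i, a i) (ac (φ i)) (q' (i + 1), a (i + 1))) ∧
      q' m = q n ∧ s n ∈ a m ∧
      ∀ j < n, ac j ≠ ∅ → ∃ i < m, φ i = j := by
  obtain ⟨m, hm, φ, q', a, h1, h2, h3, h4, h5, h6, h7, -⟩ :=
    stmt12_aux A T q s ac hq0 hs0 n hpath
  exact ⟨m, hm, φ, q', a, h1, h2, h3, h4, h5, h6, h7⟩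
end

section
/- Let A be a TGBA over AP' and T a Kripke structure over AP ⊇ AP'. If the synchronized product A⊗T has an accepting run, then the Self-Loop Aggregation Product A⊠T has an accepting run. -/
open scoped Classical

theorem Kripke.FReach_closed {α : Type} (T : Kripke α) (a : Set T.S) (P : (α → Bool) → Prop)
    {s s' : T.S} (hs : s ∈ T.FReach a P) (hd : (s, s') ∈ T.Δ) (hP : P (T.lab s)) :
    s' ∈ T.FReach a P := by
  intro b hb
  exact hb.2 ⟨s, hs b hb, hd, hP⟩

theorem const_between {β : Type} (x : ℕ → β) (p : ℕ → Prop) (h : ∀ m, ¬ p m → x (m + 1) = x m)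
    (a : ℕ) (b : ℕ) (hab : a ≤ b) (hn : ∀ m, a ≤ m → m < b → ¬ p m) : x b = x a := by
  induction b, hab using Nat.le_induction with
  | base => rfl
  | succ n hle ih =>
    rw [h n (hn n hle (Nat.lt_succ_self n))]
    exact ih fun m h1 h2 => hn m h1 (by omega)

/-- The aggregates followed along a run of the synchronized product. -/
noncomputable def slapAgg {α : Type} (A : TGBA α) (T : Kripke α) (q : ℕ → A.Q)
    (ac : ℕ → Set A.F) (g : ℕ → BForm α) : ℕ → Set T.S
  | 0 => T.FReach {T.init} (SFpred A A.init ∅)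
  | i + 1 => if (q i = q (i + 1) → ac i ≠ ∅) then
      T.FReach (T.FSucc (slapAgg A T q ac g i) fun ρ => (g i).eval ρ = true)
        (SFpred A (q (i + 1)) (ac i))
      else slapAgg A T q ac g i

/-- If the synchronized product `A ⊗ T` has an accepting run,
then the Self-Loop Aggregation Product `A ⊠ T` has an accepting run. -/
theorem stmt13 {α : Type} (A : TGBA α) (T : Kripke α)
    [Finite A.Q] [Finite A.F] [Nonempty A.F] [Finite T.S]
    (hwf : A.WF) (hAP : A.AP ⊆ T.AP) :
    (synchProd A T).HasAccRun → (SLAP A T).HasAccRun := by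
  rintro ⟨π, ⟨h0, hr⟩, hacc⟩
  obtain ⟨q, hq⟩ : ∃ q : ℕ → A.Q, ∀ i, q i = (π i).1.1 := ⟨fun i => (π i).1.1, fun _ => rfl⟩
  obtain ⟨s, hs⟩ : ∃ s : ℕ → T.S, ∀ i, s i = (π i).1.2 := ⟨fun i => (π i).1.2, fun _ => rfl⟩
  obtain ⟨ac, hac⟩ : ∃ ac : ℕ → Set A.F, ∀ i, ac i = (π i).2.2.1 :=
    ⟨fun i => (π i).2.2.1, fun _ => rfl⟩
  have hq0 : q 0 = A.init := by rw [hq, h0]; rfl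
  have hs0 : s 0 = T.init := by rw [hs, h0]; rfl
  have hstep : ∀ i, (s i, s (i + 1)) ∈ T.Δ ∧
      ∃ g : BForm α, (q i, g, ac i, q (i + 1)) ∈ A.δ ∧ g.eval (T.lab (s i)) = true := by
    intro i
    obtain ⟨⟨q₁, q₂, s₁, s₂, c, he, hd, hg⟩, hn⟩ := hr i
    rw [hq i, hs i, hq (i + 1), hs (i + 1), hac i, ← hn, he]
    exact ⟨hd, hg⟩
  choose hΔ g hg hev using hstep
  have hacc' : ∀ c : A.F, ∀ i : ℕ, ∃ j, i ≤ j ∧ c ∈ ac j := by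
    intro c i
    obtain ⟨j, hj, hc⟩ := hacc c i
    exact ⟨j, hj, by rw [hac]; exact hc⟩
  clear hacc hr h0
  let kept : ℕ → Prop := fun i => q i = q (i + 1) → ac i ≠ ∅
  have hkmem : ∀ c j, c ∈ ac j → kept j := by
    intro c j hc _ he
    rw [he] at hc
    exact hc
  have hinf : (setOf kept).Infinite := by
    refine Set.infinite_of_not_bddAbove ?_
    rintro ⟨N, hN⟩
    obtain ⟨c⟩ := (inferInstance : Nonempty A.F)
    obtain ⟨j, hj, hc⟩ := hacc' c (N + 1)
    have := hN (hkmem c j hc)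
    omega
  let b := slapAgg A T q ac g
  have hbk : ∀ i, kept i → b (i + 1) =
      T.FReach (T.FSucc (b i) fun ρ => (g i).eval ρ = true) (SFpred A (q (i + 1)) (ac i)) :=
    fun i h => if_pos h
  have hbn : ∀ i, ¬ kept i → b (i + 1) = b i := fun i h => if_neg h
  have hqn : ∀ i, ¬ kept i → q (i + 1) = q i ∧ ac i = ∅ := by
    intro i h
    have h' : ¬ (q i = q (i + 1) → ac i ≠ ∅) := h
    push Not at h'
    exact ⟨h'.1.symm, h'.2⟩
  have hinv : ∀ i, s i ∈ b i ∧ ∀ x y, x ∈ b i → (x, y) ∈ T.Δ →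
      SFpred A (q i) ∅ (T.lab x) → y ∈ b i := by
    intro i
    induction i with
    | zero =>
      refine ⟨T.subset_FReach _ _ (by rw [hs0]; rfl), fun x y hx hd hP => ?_⟩
      rw [hq0] at hP
      exact T.FReach_closed _ _ hx hd hP
    | succ i ih =>
      by_cases hk : kept i
      · rw [hbk i hk]
        refine ⟨T.subset_FReach _ _ ⟨s i, ih.1, hΔ i, hev i⟩, fun x y hx hd hP => ?_⟩
        refine T.FReach_closed _ _ hx hd ?_
        obtain ⟨f, ac', h1, h2, h3⟩ := hP
        exact ⟨f, ac', h1, h2.trans (Set.empty_subset _), h3⟩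
      · rw [hbn i hk]
        obtain ⟨h1, h2⟩ := hqn i hk
        rw [h1]
        refine ⟨ih.2 _ _ ih.1 (hΔ i) ⟨g i, ∅, ?_, subset_rfl, hev i⟩, ih.2⟩
        have := hg i
        rwa [h1, h2] at this
  let n : ℕ → ℕ := Nat.nth kept
  have hmono : StrictMono n := Nat.nth_strictMono hinf
  have hnk : ∀ k, kept (n k) := Nat.nth_mem_of_infinite hinf
  have hsurj : ∀ m, kept m → ∃ j, n j = m := fun m hm => ⟨_, Nat.nth_count hm⟩
  let x : ℕ → A.Q × Set T.S := fun i => (q i, b i)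
  have hx : ∀ m, ¬ kept m → x (m + 1) = x m := fun m hm =>
    Prod.ext (hqn m hm).1 (hbn m hm)
  refine ⟨fun k => (x (n k), BForm.tru, ac (n k), x (n k + 1)), ⟨?_, fun k => ⟨?_, ?_⟩⟩, ?_⟩
  · have : x (n 0) = x 0 := by
      refine const_between x kept hx 0 (n 0) (Nat.zero_le _) fun m _ h2 hm => ?_
      obtain ⟨j, rfl⟩ := hsurj m hm
      have := hmono.lt_iff_lt.1 h2
      omega
    change x (n 0) = _
    rw [this]
    exact Prod.ext hq0 rfl
  · exact ⟨q (n k), q (n k + 1), b (n k), b (n k + 1), ac (n k), rfl, ⟨_, (hinv _).1⟩,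
      ⟨_, (hinv _).1⟩, g (n k), hg _, hnk k, hbk _ (hnk k)⟩
  · refine (const_between x kept hx (n k + 1) (n (k + 1)) (hmono (Nat.lt_succ_self k))
      fun m h1 h2 hm => ?_).symm
    obtain ⟨j, rfl⟩ := hsurj m hm
    have h3 := hmono.lt_iff_lt.1 h2
    have h4 := hmono.lt_iff_lt.1 (show n k < n j from h1)
    omega
  · intro c i
    obtain ⟨j, hj, hc⟩ := hacc' c (n i)
    obtain ⟨k, rfl⟩ := hsurj j (hkmem c j hc)
    exact ⟨k, hmono.le_iff_le.1 hj, hc⟩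
end
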